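/- The characteristic function of the noncentral gamma density gₐ(x; y) is ĝₐ(t; y) = (1−it)^{−α} exp(ity/(1−it)), and consequently lim_{ε→0⁺} ĝₐ(εt; ε⁻¹y) = exp(ity) for every t ∈ ℝ; hence Gₐ(ε⁻¹x; ε⁻¹y) → 1 if x > y and → 0 if x < y as ε → 0⁺. -/

import Mathlib

open MeasureTheory Filter

/-- The noncentral gamma density `g_α(x;y) = e^{−y} g_α(x) ₀F₁(α; xy)`. -/
noncomputable def ncGammaPdf (α y x : ℝ) : ℝ :=
  Real.exp (-y) * (x ^ (α - 1) * Real.exp (-x) / Real.Gamma α) *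
    ∑' k : ℕ, (x * y) ^ k * Real.Gamma α / (Real.Gamma (α + k) * (Nat.factorial k))

lemma ncGammaPdf_nonneg {α y x : ℝ} (hα : 0 < α) (hy : 0 ≤ y) (hx : 0 < x) :
    0 ≤ ncGammaPdf α y x := by
  unfold ncGammaPdf
  have hΓ := Real.Gamma_pos_of_pos hα
  refine mul_nonneg (by positivity) (tsum_nonneg fun k => ?_)
  have := Real.Gamma_pos_of_pos (show 0 < α + k by positivity)
  positivity

lemma integrableOn_rpow_mul_exp_neg_mul_Ioi {a r : ℝ} (ha : 0 < a) (hr : 0 < r) :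
    IntegrableOn (fun x : ℝ => x ^ (a - 1) * Real.exp (-(r * x))) (Set.Ioi 0) := by
  refine Integrable.of_integral_ne_zero ?_
  rw [Real.integral_rpow_mul_exp_neg_mul_Ioi ha hr]
  have := Real.Gamma_pos_of_pos ha
  positivity

lemma norm_cpow_mul_cexp_neg_mul {a x : ℝ} (hx : 0 < x) (r : ℂ) :
    ‖(x : ℂ) ^ ((a : ℂ) - 1) * Complex.exp (-(r * x))‖ =
      x ^ (a - 1) * Real.exp (-(r.re * x)) := by
  rw [norm_mul, Complex.norm_cpow_eq_rpow_re_of_pos hx, Complex.norm_exp]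
  simp

lemma integrableOn_cpow_mul_cexp_neg_mul_Ioi {a : ℝ} {r : ℂ} (ha : 0 < a) (hr : 0 < r.re) :
    IntegrableOn (fun x : ℝ => (x : ℂ) ^ ((a : ℂ) - 1) * Complex.exp (-(r * x)))
      (Set.Ioi 0) := by
  refine Integrable.mono' (integrableOn_rpow_mul_exp_neg_mul_Ioi ha hr) ?_ ?_
  · exact (by fun_prop : Measurable fun x : ℝ =>
      (x : ℂ) ^ ((a : ℂ) - 1) * Complex.exp (-(r * x))).aestronglyMeasurable
  · filter_upwards [ae_restrict_mem measurableSet_Ioi] with x hx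
    exact (norm_cpow_mul_cexp_neg_mul hx r).le

open ProbabilityTheory in
/-- The Gamma integral `∫ x ^ (a - 1) * exp (-r x)` for a complex rate `r` with positive real
part. -/
lemma integral_cpow_mul_cexp_neg_mul_Ioi_of_re_pos {a : ℝ} {r : ℂ} (ha : 0 < a) (hr : 0 < r.re) :
    ∫ x in Set.Ioi (0:ℝ), (x : ℂ) ^ ((a : ℂ) - 1) * Complex.exp (-(r * x)) =
      (1 / r) ^ (a : ℂ) * Complex.Gamma a := by
  set w : ℝ → ENNReal := fun x => ENNReal.ofReal (x ^ (a - 1)) with hw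
  have hwm : Measurable w := by fun_prop
  have hwt : ∀ᵐ x ∂(volume.restrict (Set.Ioi (0:ℝ))), w x < ⊤ :=
    ae_of_all _ fun x => ENNReal.ofReal_lt_top
  set μ : Measure ℝ := (volume.restrict (Set.Ioi 0)).withDensity w with hμ
  have hwx {x : ℝ} (hx : 0 < x) : (w x).toReal = x ^ (a - 1) :=
    ENNReal.toReal_ofReal (by positivity)
  have hmgf (s : ℂ) : complexMGF (fun x => -x) μ s =
      ∫ x in Set.Ioi (0:ℝ), (x : ℂ) ^ ((a : ℂ) - 1) * Complex.exp (-(s * x)) := by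
    rw [complexMGF, hμ, integral_withDensity_eq_integral_toReal_smul hwm hwt]
    refine setIntegral_congr_fun measurableSet_Ioi fun x hx => ?_
    have hx : 0 < x := hx
    simp only [hwx hx, Complex.real_smul, Complex.ofReal_cpow hx.le]
    push_cast
    rw [mul_neg]
  have hsub : Set.Ioi 0 ⊆ interior (integrableExpSet (fun x => -x) μ) := by
    refine interior_maximal (fun t ht => ?_) isOpen_Ioi
    rw [integrableExpSet, Set.mem_ofPred_eq, hμ,
      integrable_withDensity_iff_integrable_smul' hwm hwt]
    refine (integrableOn_rpow_mul_exp_neg_mul_Ioi ha ht).congr_fun (fun x hx => ?_)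
      measurableSet_Ioi
    simp only [hwx hx, smul_eq_mul, mul_neg]
  have hf : AnalyticOnNhd ℂ (complexMGF (fun x => -x) μ) {s | 0 < s.re} :=
    analyticOnNhd_complexMGF.mono fun s hs => hsub hs
  have hg : AnalyticOnNhd ℂ (fun s : ℂ => (1 / s) ^ (a : ℂ) * Complex.Gamma a)
      {s | 0 < s.re} := by
    refine DifferentiableOn.analyticOnNhd (fun s hs => ?_)
      (isOpen_Ioi.preimage Complex.continuous_re)
    have hs : 0 < s.re := hs
    have hs0 : s ≠ 0 := fun h => by simp [h] at hs
    refine DifferentiableAt.differentiableWithinAt ?_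
    refine (DifferentiableAt.cpow (by fun_prop (disch := assumption)) (by fun_prop) ?_).mul_const _
    refine Or.inl ?_
    rw [one_div, Complex.inv_re]
    exact div_pos hs (Complex.normSq_pos.2 hs0)
  have hreal : ∃ᶠ s in nhdsWithin (1 : ℂ) {1}ᶜ,
      complexMGF (fun x => -x) μ s = (1 / s) ^ (a : ℂ) * Complex.Gamma a := by
    have ht : Tendsto (fun x : ℝ => (x : ℂ)) (nhdsWithin 1 (Set.Ioi 1))
        (nhdsWithin (1 : ℂ) {1}ᶜ) := by
      refine tendsto_nhdsWithin_iff.2 ⟨?_, ?_⟩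
      · exact (Complex.continuous_ofReal.tendsto' 1 1 (by simp)).mono_left nhdsWithin_le_nhds
      · filter_upwards [self_mem_nhdsWithin] with x hx
        have hx : (1 : ℝ) < x := hx
        simpa using hx.ne'
    refine ht.frequently (Eventually.frequently ?_)
    filter_upwards [self_mem_nhdsWithin] with x hx
    have hx : (1 : ℝ) < x := hx
    rw [hmgf]
    exact Complex.integral_cpow_mul_exp_neg_mul_Ioi (by simpa using ha) (by linarith)
  rw [← hmgf]
  exact hf.eqOn_of_preconnected_of_frequently_eq hg (convex_halfSpace_re_gt 0).isPreconnected
    (by simp) hreal hr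

lemma cexp_mul_ncGammaPdf_eq_tsum {α y x : ℝ} (hα : 0 < α) (hx : 0 < x) (z : ℂ) :
    Complex.exp (z * x) * (ncGammaPdf α y x : ℂ) =
      ∑' k : ℕ, ((Real.exp (-y) * y ^ k / (Real.Gamma (α + k) * k.factorial) : ℝ) : ℂ) *
        ((x : ℂ) ^ (((α + k : ℝ) : ℂ) - 1) * Complex.exp (-((1 - z) * x))) := by
  have hΓ := (Real.Gamma_pos_of_pos hα).ne'
  have hpow (k : ℕ) : (x : ℂ) ^ (((α + k : ℝ) : ℂ) - 1) = ((x ^ (α - 1) * x ^ k : ℝ) : ℂ) := by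
    rw [← Real.rpow_natCast, ← Real.rpow_add hx, Complex.ofReal_cpow hx.le]
    push_cast
    ring_nf
  have hexp : Complex.exp (-((1 - z) * x)) = Complex.exp (z * x) * ((Real.exp (-x) : ℝ) : ℂ) := by
    rw [Complex.ofReal_exp, ← Complex.exp_add]
    push_cast
    ring_nf
  unfold ncGammaPdf
  rw [← tsum_mul_left, Complex.ofReal_tsum, ← tsum_mul_left]
  refine tsum_congr fun k => ?_
  rw [hpow, hexp]
  have hΓk := (Real.Gamma_pos_of_pos (show 0 < α + k by positivity)).ne'
  have : Real.exp (-y) * (x ^ (α - 1) * Real.exp (-x) / Real.Gamma α) *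
      ((x * y) ^ k * Real.Gamma α / (Real.Gamma (α + k) * (Nat.factorial k))) =
      Real.exp (-y) * y ^ k / (Real.Gamma (α + k) * k.factorial) *
        ((x ^ (α - 1) * x ^ k) * Real.exp (-x)) := by
    rw [mul_pow]
    field_simp
  rw [this]
  push_cast
  ring

/-- The Laplace transform of the noncentral gamma density on the half-plane `re z < 1`. -/
lemma integral_cexp_mul_ncGammaPdf {α y : ℝ} (hα : 0 < α) (hy : 0 ≤ y) {z : ℂ} (hz : z.re < 1) :
    (∫ x in Set.Ioi (0:ℝ), Complex.exp (z * x) * (ncGammaPdf α y x : ℂ)) =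
      (1 - z) ^ (-(α:ℂ)) * Complex.exp (z * y / (1 - z)) := by
  have hr : 0 < (1 - z).re := by simpa using hz
  have hr0 : 1 - z ≠ 0 := fun h => by simp [h] at hr
  have hαk (k : ℕ) : 0 < α + k := by positivity
  have hΓ (k : ℕ) := Real.Gamma_pos_of_pos (hαk k)
  set c : ℕ → ℝ := fun k => Real.exp (-y) * y ^ k / (Real.Gamma (α + k) * k.factorial) with hc
  have hc0 (k : ℕ) : 0 ≤ c k := by
    have := hΓ k
    positivity
  set F : ℕ → ℝ → ℂ := fun k x => (c k : ℂ) *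
    ((x : ℂ) ^ (((α + k : ℝ) : ℂ) - 1) * Complex.exp (-((1 - z) * x))) with hF
  have hint (k : ℕ) : Integrable (F k) (volume.restrict (Set.Ioi 0)) :=
    (integrableOn_cpow_mul_cexp_neg_mul_Ioi (hαk k) hr).const_mul _
  have hnorm (k : ℕ) : ∫ x in Set.Ioi (0:ℝ), ‖F k x‖ =
      Real.exp (-y) * (1 / (1 - z).re) ^ α * ((y * (1 / (1 - z).re)) ^ k / k.factorial) := by
    have : ∫ x in Set.Ioi (0:ℝ), ‖F k x‖ =
        ∫ x in Set.Ioi (0:ℝ), c k * (x ^ (α + k - 1) * Real.exp (-((1 - z).re * x))) := by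
      refine setIntegral_congr_fun measurableSet_Ioi fun x hx => ?_
      simp only [hF]
      rw [norm_mul, norm_cpow_mul_cexp_neg_mul hx, Complex.norm_of_nonneg (hc0 k)]
    rw [this, integral_const_mul, Real.integral_rpow_mul_exp_neg_mul_Ioi (hαk k) hr,
      Real.rpow_add (by positivity), Real.rpow_natCast, mul_pow]
    have := (hΓ k).ne'
    simp only [hc]
    field_simp
  have hval (k : ℕ) : ∫ x in Set.Ioi (0:ℝ), F k x =
      Complex.exp (-y) * (1 - z) ^ (-(α:ℂ)) * ((y / (1 - z)) ^ k / k.factorial) := by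
    have hinv : (1 / (1 - z)) ^ (((α + k : ℝ) : ℂ)) =
        (1 - z) ^ (-(α:ℂ)) * (1 / (1 - z)) ^ k := by
      have harg : (1 - z).arg ≠ Real.pi := by
        intro h
        have := (Complex.arg_eq_pi_iff.1 h).1
        linarith
      push_cast
      rw [Complex.cpow_add _ _ (one_div_ne_zero hr0), Complex.cpow_natCast, one_div,
        Complex.inv_cpow _ _ harg, Complex.cpow_neg]
    have hΓk : (Real.Gamma (α + k) : ℂ) ≠ 0 := by exact_mod_cast (hΓ k).ne'
    simp only [hF]
    rw [integral_const_mul, integral_cpow_mul_cexp_neg_mul_Ioi_of_re_pos (hαk k) hr,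
      hinv, Complex.Gamma_ofReal]
    simp only [hc]
    push_cast at hΓk ⊢
    rw [div_pow, div_pow]
    field_simp
    simp
  have hsum : Summable fun k => ∫ x in Set.Ioi (0:ℝ), ‖F k x‖ := by
    simp only [hnorm]
    exact (Real.summable_pow_div_factorial _).mul_left _
  have key := hasSum_integral_of_summable_integral_norm hint hsum
  have hLHS : (∫ x in Set.Ioi (0:ℝ), Complex.exp (z * x) * (ncGammaPdf α y x : ℂ)) =
      ∫ x in Set.Ioi (0:ℝ), ∑' k, F k x :=
    setIntegral_congr_fun measurableSet_Ioi fun x hx => cexp_mul_ncGammaPdf_eq_tsum hα hx z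
  rw [hLHS, ← key.tsum_eq]
  simp only [hval]
  rw [tsum_mul_left, (NormedSpace.expSeries_div_hasSum_exp ((y : ℂ) / (1 - z))).tsum_eq,
    ← Complex.exp_eq_exp_ℂ, mul_comm (Complex.exp _), mul_assoc, ← Complex.exp_add]
  congr 2
  field_simp
  ring

/-- The moment generating function of the noncentral gamma density. -/
lemma integral_exp_mul_ncGammaPdf {α y s : ℝ} (hα : 0 < α) (hy : 0 ≤ y) (hs : s < 1) :
    (∫ x in Set.Ioi (0:ℝ), Real.exp (s * x) * ncGammaPdf α y x) =
      (1 - s) ^ (-α) * Real.exp (s * y / (1 - s)) := by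
  have h := integral_cexp_mul_ncGammaPdf hα hy (z := (s : ℂ)) (by simpa using hs)
  have h1 : ((1 : ℂ) - s) ^ (-(α:ℂ)) = (((1 - s) ^ (-α) : ℝ) : ℂ) := by
    rw [Complex.ofReal_cpow (by linarith)]
    push_cast
    rfl
  rw [h1] at h
  apply Complex.ofReal_injective
  rw [← integral_complex_ofReal]
  push_cast at h ⊢
  exact h

lemma integrableOn_exp_mul_ncGammaPdf {α y s : ℝ} (hα : 0 < α) (hy : 0 ≤ y) (hs : s < 1) :
    IntegrableOn (fun x => Real.exp (s * x) * ncGammaPdf α y x) (Set.Ioi 0) := by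
  refine Integrable.of_integral_ne_zero ?_
  rw [integral_exp_mul_ncGammaPdf hα hy hs]
  have : 0 < 1 - s := by linarith
  positivity

lemma integrableOn_ncGammaPdf {α y : ℝ} (hα : 0 < α) (hy : 0 ≤ y) :
    IntegrableOn (ncGammaPdf α y) (Set.Ioi 0) := by
  simpa using integrableOn_exp_mul_ncGammaPdf hα hy zero_lt_one

lemma integral_ncGammaPdf {α y : ℝ} (hα : 0 < α) (hy : 0 ≤ y) :
    ∫ x in Set.Ioi (0:ℝ), ncGammaPdf α y x = 1 := by
  simpa using integral_exp_mul_ncGammaPdf hα hy zero_lt_one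

/-- Chernoff's bound for the noncentral gamma density. -/
lemma setIntegral_ncGammaPdf_le {α y s a : ℝ} (hα : 0 < α) (hy : 0 ≤ y) (hs : s < 1)
    {A : Set ℝ} (hA : MeasurableSet A) (hA0 : A ⊆ Set.Ioi 0) (hsA : ∀ u ∈ A, s * a ≤ s * u) :
    ∫ u in A, ncGammaPdf α y u ≤
      (1 - s) ^ (-α) * Real.exp (s * y / (1 - s) - s * a) := by
  have hI := (integrableOn_exp_mul_ncGammaPdf hα hy hs).const_mul (Real.exp (-(s * a)))
  calc ∫ u in A, ncGammaPdf α y u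
      ≤ ∫ u in A, Real.exp (-(s * a)) * (Real.exp (s * u) * ncGammaPdf α y u) := by
        refine setIntegral_mono_on ((integrableOn_ncGammaPdf hα hy).mono_set hA0)
          (IntegrableOn.mono_set hI hA0) hA fun u hu => ?_
        rw [← mul_assoc, ← Real.exp_add]
        refine le_mul_of_one_le_left (ncGammaPdf_nonneg hα hy (hA0 hu)) (Real.one_le_exp ?_)
        linarith [hsA u hu]
    _ ≤ ∫ u in Set.Ioi 0, Real.exp (-(s * a)) * (Real.exp (s * u) * ncGammaPdf α y u) := by
        refine setIntegral_mono_set hI ?_ hA0.eventuallyLE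
        filter_upwards [ae_restrict_mem measurableSet_Ioi] with u hu
        have := ncGammaPdf_nonneg hα hy hu
        simp only [Pi.zero_apply]
        positivity
    _ = _ := by
        rw [integral_const_mul, integral_exp_mul_ncGammaPdf hα hy hs,
          sub_eq_add_neg (s * y / (1 - s)), Real.exp_add]
        ring

/-- The mass which the rescaled noncentral gamma distribution puts on the side of `x` away from
its limit `y` vanishes. -/
lemma tendsto_setIntegral_ncGammaPdf_zero {α x y : ℝ} (hα : 0 < α) (hx : 0 < x) (hy : 0 ≤ y)
    (hxy : x ≠ y) {A : ℝ → Set ℝ} (hA : ∀ ε, MeasurableSet (A ε))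
    (hA0 : ∀ ε, 0 < ε → A ε ⊆ Set.Ioi 0)
    (hxA : ∀ ε, 0 < ε → ∀ u ∈ A ε, 0 ≤ (x - y) * (u - ε⁻¹ * x)) :
    Tendsto (fun ε : ℝ => ∫ u in A ε, ncGammaPdf α (ε⁻¹ * y) u)
      (nhdsWithin 0 (Set.Ioi 0)) (nhds 0) := by
  set s := (x - y) / (2 * x) with hs
  have h1s : 1 - s = (x + y) / (2 * x) := by
    rw [hs]
    field_simp
    ring
  have hs1 : s < 1 := by
    have : 0 < 1 - s := by
      rw [h1s]
      positivity
    linarith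
  have hd : 0 < (x - y) ^ 2 / (2 * (x + y)) := by
    have := sub_ne_zero.2 hxy
    positivity
  have hexponent (ε : ℝ) : s * (ε⁻¹ * y) / (1 - s) - s * (ε⁻¹ * x) =
      -((x - y) ^ 2 / (2 * (x + y)) * ε⁻¹) := by
    have : x + y ≠ 0 := by positivity
    rw [h1s, hs]
    field_simp
    ring
  have hlim : Tendsto (fun ε : ℝ => (1 - s) ^ (-α) *
      Real.exp (-((x - y) ^ 2 / (2 * (x + y)) * ε⁻¹))) (nhdsWithin 0 (Set.Ioi 0)) (nhds 0) := by
    simpa using (Real.tendsto_exp_neg_atTop_nhds_zero.comp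
      (tendsto_inv_nhdsGT_zero.const_mul_atTop hd)).const_mul ((1 - s) ^ (-α))
  refine tendsto_of_tendsto_of_tendsto_of_le_of_le' tendsto_const_nhds hlim ?_ ?_
  · filter_upwards [self_mem_nhdsWithin] with ε hε
    have hε : 0 < ε := hε
    exact setIntegral_nonneg (hA ε) fun u hu =>
      ncGammaPdf_nonneg hα (by positivity) (hA0 ε hε hu)
  · filter_upwards [self_mem_nhdsWithin] with ε hε
    have hε : 0 < ε := hε
    rw [← hexponent]
    refine setIntegral_ncGammaPdf_le hα (by positivity) hs1 (hA ε) (hA0 ε hε) fun u hu => ?_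
    have : 0 ≤ s * (u - ε⁻¹ * x) := by
      rw [hs, div_mul_eq_mul_div]
      exact div_nonneg (hxA ε hε u hu) (by positivity)
    linarith

/-- The characteristic function of the noncentral gamma density is
`(1−it)^{−α} exp(ity/(1−it))`; hence `ĝ_α(εt; ε⁻¹y) → e^{ity}` as `ε → 0⁺`, and the
rescaled cdf `G_α(ε⁻¹x; ε⁻¹y)` tends to `1` for `x > y` and to `0` for `x < y`. -/
theorem stmt_17 (α : ℝ) (hα : 0 < α) (y : ℝ) (hy : 0 ≤ y) :
    (∀ t : ℝ,
      (∫ x in Set.Ioi (0:ℝ), Complex.exp (Complex.I * t * x) * (ncGammaPdf α y x : ℂ)) =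
        (1 - Complex.I * t) ^ (-(α:ℂ)) *
          Complex.exp (Complex.I * t * y / (1 - Complex.I * t))) ∧
    (∀ t : ℝ,
      Tendsto (fun ε : ℝ =>
          (1 - Complex.I * (ε * t)) ^ (-(α:ℂ)) *
            Complex.exp (Complex.I * (ε * t) * (ε⁻¹ * y) / (1 - Complex.I * (ε * t))))
        (nhdsWithin 0 (Set.Ioi 0)) (nhds (Complex.exp (Complex.I * t * y)))) ∧
    (∀ x : ℝ, y < x →
      Tendsto (fun ε : ℝ => ∫ u in Set.Ioc (0:ℝ) (ε⁻¹ * x), ncGammaPdf α (ε⁻¹ * y) u)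
        (nhdsWithin 0 (Set.Ioi 0)) (nhds 1)) ∧
    (∀ x : ℝ, 0 < x → x < y →
      Tendsto (fun ε : ℝ => ∫ u in Set.Ioc (0:ℝ) (ε⁻¹ * x), ncGammaPdf α (ε⁻¹ * y) u)
        (nhdsWithin 0 (Set.Ioi 0)) (nhds 0)) := by
  refine ⟨fun t => integral_cexp_mul_ncGammaPdf hα hy (by simp), fun t => ?_,
    fun x hx => ?_, fun x hx0 hx => ?_⟩
  · have hcont : ContinuousAt (fun ε : ℝ => (1 - Complex.I * (ε * t)) ^ (-(α:ℂ)) *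
        Complex.exp (Complex.I * t * y / (1 - Complex.I * (ε * t)))) 0 := by
      refine ContinuousAt.mul (ContinuousAt.cpow (by fun_prop) (by fun_prop) (by simp)) ?_
      exact Complex.continuous_exp.continuousAt.comp
        (ContinuousAt.div (by fun_prop) (by fun_prop) (by simp))
    have hlim := hcont.tendsto.mono_left (nhdsWithin_le_nhds (s := Set.Ioi 0))
    simp only [Complex.ofReal_zero, zero_mul, mul_zero, sub_zero, Complex.one_cpow, one_mul,
      div_one] at hlim
    refine hlim.congr' ?_
    filter_upwards [self_mem_nhdsWithin] with ε hε
    have hε : (ε : ℂ) ≠ 0 := by exact_mod_cast (ne_of_gt hε)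
    congr 3
    rw [Complex.ofReal_inv]
    field_simp
  · have hx0 : 0 < x := hy.trans_lt hx
    have hlim := tendsto_setIntegral_ncGammaPdf_zero hα hx0 hy hx.ne'
      (A := fun ε => Set.Ioi (ε⁻¹ * x)) (fun _ => measurableSet_Ioi)
      (fun ε hε => Set.Ioi_subset_Ioi (by positivity))
      (fun ε _ u hu => mul_nonneg (sub_nonneg.2 hx.le) (sub_nonneg.2 (le_of_lt hu)))
    have hlim' := hlim.const_sub 1
    rw [sub_zero] at hlim'
    refine hlim'.congr' ?_
    filter_upwards [self_mem_nhdsWithin] with ε hε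
    have hε : 0 < ε := hε
    have ha : 0 ≤ ε⁻¹ * x := by positivity
    have hy' : 0 ≤ ε⁻¹ * y := by positivity
    have hI := integrableOn_ncGammaPdf hα hy'
    rw [sub_eq_iff_eq_add, ← integral_ncGammaPdf hα hy', ← Set.Ioc_union_Ioi_eq_Ioi ha]
    exact setIntegral_union (Set.Ioc_disjoint_Ioi le_rfl) measurableSet_Ioi
      (hI.mono_set Set.Ioc_subset_Ioi_self) (hI.mono_set (Set.Ioi_subset_Ioi ha))
  · exact tendsto_setIntegral_ncGammaPdf_zero hα hx0 hy hx.ne (fun _ => measurableSet_Ioc)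
      (fun _ _ => Set.Ioc_subset_Ioi_self)
      (fun ε _ u hu => mul_nonneg_of_nonpos_of_nonpos (sub_nonpos.2 hx.le) (sub_nonpos.2 hu.2))
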